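/- If the abelian group H is torsion-free, then for every abelian group G the subgroup Pext¹(G,H) = ⋂_{n≥1} n·Ext¹(G,H) is a divisible group: for every x ∈ Pext¹(G,H) and every integer n ≥ 1 there exists y ∈ Pext¹(G,H) with n·y = x. -/

import Mathlib

open CategoryTheory

/-- `Ext¹(G,H)`: the Ext group `Ext¹_ℤ(G,H)` of abelian groups (ℤ-modules). -/
noncomputable abbrev Ext1 (G H : Type) [AddCommGroup G] [AddCommGroup H] : Type :=
  ((_root_.Ext ℤ (ModuleCat.{0} ℤ) 1).obj (Opposite.op (ModuleCat.of ℤ G))).obj (ModuleCat.of ℤ H)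

/-- `Pext¹(G,H) = ⋂_{n ≥ 1} n · Ext¹(G,H)`. -/
noncomputable def Pext1 (G H : Type) [AddCommGroup G] [AddCommGroup H] :
    AddSubgroup (Ext1 G H) :=
  ⨅ (n : ℕ) (_ : 1 ≤ n), (n • AddMonoidHom.id (Ext1 G H)).range

/-!
Embed a torsion-free module `H` over a PID `R` in its module of fractions `D`, and let `Q = D / H`.
Both `D` and `Q` are divisible, hence injective, so the connecting map `Hom(G, Q) → Ext¹(G, H)` is
onto, and its kernel consists of the maps that lift to `D`. If the image of `f` lies in
`⋂ r • Ext¹(G, H)` and `r • t = 0` in `G`, write `f = r • g + h` with `h` lifting to `D`. The lift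
kills `t` because `D` is torsion-free, and `r • g` kills `t` because `r • t = 0`. So `f` factors
through `G / T`, where `T` is the torsion of `G`. Hence `⋂ r • Ext¹(G, H)` is the image of
`Hom(G / T, Q)`, which is divisible since `G / T` is torsion-free and `Q` is injective.
-/

open Abelian Opposite nonZeroDivisors

universe w v u

section Divisible

variable (R : Type*) [CommRing R] (M : Type*) [AddCommGroup M] [Module R M]

/-- Divisibility of an `R`-module, as a proposition: multiplication by each non-zero-divisor of
`R` is onto. -/
def IsDivisible : Prop :=
  ∀ r ∈ R⁰, ∀ x : M, ∃ y, r • y = x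

/-- The first Ulm submodule `⋂ r • M` of `M`, over all non-zero-divisors `r` of `R`. -/
def ulmSubmodule : Submodule R M :=
  ⨅ r ∈ R⁰, LinearMap.range (LinearMap.lsmul R M r)

variable {R M} {N : Type*} [AddCommGroup N] [Module R N]

lemma mem_ulmSubmodule_iff {x : M} : x ∈ ulmSubmodule R M ↔ ∀ r ∈ R⁰, ∃ y, r • y = x := by
  simp only [ulmSubmodule, Submodule.mem_iInf, LinearMap.mem_range, LinearMap.lsmul_apply]

lemma mem_ulmSubmodule_int_iff {A : Type*} [AddCommGroup A] [Module ℤ A] {x : A} :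
    x ∈ ulmSubmodule ℤ A ↔ ∀ n : ℕ, 1 ≤ n → ∃ y, n • y = x := by
  rw [mem_ulmSubmodule_iff]
  refine ⟨fun h n hn ↦ ?_, fun h r hr ↦ ?_⟩
  · obtain ⟨y, hy⟩ := h n (mem_nonZeroDivisors_of_ne_zero (by lia))
    exact ⟨y, by rw [← Nat.cast_smul_eq_nsmul ℤ, hy]⟩
  · have hr₀ : r ≠ 0 := nonZeroDivisors.ne_zero hr
    obtain ⟨n, rfl | rfl⟩ := r.eq_nat_or_neg
    all_goals obtain ⟨y, hy⟩ := h n (by lia)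
    · exact ⟨y, by rw [Nat.cast_smul_eq_nsmul, hy]⟩
    · exact ⟨-y, by rw [neg_smul_neg, Nat.cast_smul_eq_nsmul, hy]⟩

lemma IsDivisible.of_surjective (hM : IsDivisible R M) {f : M →ₗ[R] N}
    (hf : Function.Surjective f) : IsDivisible R N := by
  intro r hr x
  obtain ⟨m, rfl⟩ := hf x
  obtain ⟨y, rfl⟩ := hM r hr m
  exact ⟨f y, (map_smul f r y).symm⟩

lemma IsDivisible.range (hM : IsDivisible R M) (f : M →ₗ[R] N) :
    IsDivisible R (LinearMap.range f) :=
  hM.of_surjective f.surjective_rangeRestrict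

lemma IsDivisible.exists_mem_smul_eq {S : Submodule R M} (hS : IsDivisible R S) {r : R}
    (hr : r ∈ R⁰) {x : M} (hx : x ∈ S) : ∃ y ∈ S, r • y = x := by
  obtain ⟨y, hy⟩ := hS r hr ⟨x, hx⟩
  exact ⟨y, y.2, congrArg Subtype.val hy⟩

lemma IsDivisible.le_ulmSubmodule {S : Submodule R M} (hS : IsDivisible R S) :
    S ≤ ulmSubmodule R M := fun _ hx ↦ mem_ulmSubmodule_iff.2 fun _ hr ↦
  let ⟨y, _, hy⟩ := hS.exists_mem_smul_eq hr hx
  ⟨y, hy⟩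

lemma IsDivisible.ulmSubmodule_of_le_range (hM : IsDivisible R M) {f : M →ₗ[R] N}
    (hf : ulmSubmodule R N ≤ LinearMap.range f) : IsDivisible R (ulmSubmodule R N) := by
  rw [le_antisymm hf (hM.range f).le_ulmSubmodule]
  exact hM.range f

lemma IsDivisible.ulmSubmodule_congr (e : M ≃ₗ[R] N) (hM : IsDivisible R (ulmSubmodule R M)) :
    IsDivisible R (ulmSubmodule R N) := by
  refine hM.ulmSubmodule_of_le_range (f := e.toLinearMap ∘ₗ (ulmSubmodule R M).subtype) ?_
  intro x hx
  refine ⟨⟨e.symm x, mem_ulmSubmodule_iff.2 fun r hr ↦ ?_⟩, e.apply_symm_apply x⟩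
  obtain ⟨y, rfl⟩ := mem_ulmSubmodule_iff.1 hx r hr
  exact ⟨e.symm y, (map_smul e.symm r y).symm⟩

lemma IsDivisible.baer [IsDomain R] [IsPrincipalIdealRing R] (hM : IsDivisible R M) :
    Module.Baer R M := by
  intro I g
  obtain ⟨a, rfl⟩ := IsPrincipalIdealRing.principal I
  obtain rfl | ha := eq_or_ne a 0
  · refine ⟨0, fun r hr ↦ ?_⟩
    obtain rfl : r = 0 := by simpa using hr
    exact (map_zero g).symm
  · obtain ⟨y, hy⟩ := hM a (mem_nonZeroDivisors_of_ne_zero ha)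
      (g ⟨a, Submodule.mem_span_singleton_self a⟩)
    refine ⟨LinearMap.toSpanSingleton R M y, fun r hr ↦ ?_⟩
    obtain ⟨c, rfl⟩ := Submodule.mem_span_singleton.1 hr
    rw [LinearMap.toSpanSingleton_apply, smul_assoc, hy, ← map_smul, SetLike.mk_smul_mk]

lemma isDivisible_linearMap [Module.IsTorsionFree R M] (hN : Module.Baer R N) :
    IsDivisible R (M →ₗ[R] N) := by
  intro r hr f
  have smul_injective : Function.Injective (LinearMap.lsmul R M r) :=
    (isRegular_iff_mem_nonZeroDivisors.2 hr).isSMulRegular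
  obtain ⟨g, hg⟩ := hN.extension_property _ smul_injective f
  refine ⟨g, LinearMap.ext fun m ↦ ?_⟩
  rw [← hg, LinearMap.smul_apply, LinearMap.comp_apply, LinearMap.lsmul_apply, map_smul]

lemma torsion_le_ker_of_isTorsionFree [Module.IsTorsionFree R N] (f : M →ₗ[R] N) :
    Submodule.torsion R M ≤ LinearMap.ker f := by
  rintro x ⟨r, hr⟩
  have hfx : (r : R) • f x = 0 := by rw [← map_smul]; exact (congrArg f hr).trans (map_zero f)
  exact (isRegular_iff_mem_nonZeroDivisors.2 r.2).isSMulRegular.right_eq_zero_of_smul hfx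

lemma isTorsionFree_int_of_nsmul_eq_zero {A : Type*} [AddCommGroup A]
    (hA : ∀ (n : ℕ) (x : A), 1 ≤ n → n • x = 0 → x = 0) : Module.IsTorsionFree ℤ A := by
  have : IsAddTorsionFree A := ⟨fun n hn a b hab ↦ sub_eq_zero.1 <|
    hA n (a - b) (Nat.pos_of_ne_zero hn) (by rw [nsmul_sub, sub_eq_zero]; exact hab)⟩
  infer_instance

end Divisible

section FractionModule

variable (R : Type*) [CommRing R] (M : Type*) [AddCommGroup M] [Module R M]

lemma isDivisible_localizedModule : IsDivisible R (LocalizedModule R⁰ M) := fun r hr ↦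
  ((Module.End.isUnit_iff _).1
    (IsLocalizedModule.map_units (LocalizedModule.mkLinearMap R⁰ M) ⟨r, hr⟩)).surjective

lemma isTorsionFree_localizedModule : Module.IsTorsionFree R (LocalizedModule R⁰ M) where
  isSMulRegular r hr := IsLocalizedModule.smul_injective (LocalizedModule.mkLinearMap R⁰ M)
    ⟨r, isRegular_iff_mem_nonZeroDivisors.1 hr⟩

lemma mkLinearMap_injective_of_isTorsionFree [Module.IsTorsionFree R M] :
    Function.Injective (LocalizedModule.mkLinearMap R⁰ M) :=
  (IsLocalizedModule.injective_iff_isRegular R⁰ _).2 fun r ↦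
    (isRegular_iff_mem_nonZeroDivisors.2 r.2).isSMulRegular

end FractionModule

section ExtDivisible

variable {R : Type u} [CommRing R]

/-- The connecting map `Hom(G, S.X₃) → Ext¹(G, S.X₁)` of a short exact sequence `S`. -/
noncomputable def connectingHom [Small.{v} R] {S : ShortComplex (ModuleCat.{v} R)}
    (hS : S.ShortExact) (G : ModuleCat.{v} R) : (G →ₗ[R] S.X₃) →ₗ[R] Abelian.Ext G S.X₁ 1 :=
  hS.extClass.postcompOfLinear R G (zero_add 1) ∘ₗ
    (Ext.linearEquiv₀ (R := R)).symm.toLinearMap ∘ₗ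
      (ModuleCat.homLinearEquiv (S := R)).symm.toLinearMap

variable [Small.{v} R] {S : ShortComplex (ModuleCat.{v} R)} (hS : S.ShortExact)
  (G : ModuleCat.{v} R)

lemma connectingHom_surjective [Injective S.X₂] : Function.Surjective (connectingHom hS G) :=
  (postcomp_extClass_surjective_of_projective_X₂ hS G 0).comp
    ((Ext.linearEquiv₀ (R := R)).symm.surjective.comp
      (ModuleCat.homLinearEquiv (S := R)).symm.surjective)

variable {G}

lemma exists_comp_eq_of_connectingHom_eq_zero {f : G →ₗ[R] S.X₃} (hf : connectingHom hS G f = 0) :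
    ∃ h : G →ₗ[R] S.X₂, S.g.hom ∘ₗ h = f := by
  obtain ⟨h, hh⟩ := Ext.covariant_sequence_exact₃ G hS (.mk₀ (ModuleCat.ofHom f)) (zero_add 1) hf
  obtain ⟨h, rfl⟩ := (Ext.linearEquiv₀ (R := R)).symm.surjective h
  have comp_eq : h ≫ S.g = ModuleCat.ofHom f :=
    (Ext.linearEquiv₀ (R := R)).symm.injective (by simpa using hh)
  exact ⟨h.hom, congrArg ModuleCat.Hom.hom comp_eq⟩

lemma torsion_le_ker_of_connectingHom_mem_ulmSubmodule [Injective S.X₂]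
    [Module.IsTorsionFree R S.X₂] {f : G →ₗ[R] S.X₃}
    (hf : connectingHom hS G f ∈ ulmSubmodule R (Abelian.Ext G S.X₁ 1)) :
    Submodule.torsion R G ≤ LinearMap.ker f := by
  rintro t ⟨r, hr⟩
  obtain ⟨y, hy⟩ := mem_ulmSubmodule_iff.1 hf r r.2
  obtain ⟨g, rfl⟩ := connectingHom_surjective hS G y
  obtain ⟨h, hh⟩ := exists_comp_eq_of_connectingHom_eq_zero hS (f := f - (r : R) • g)
    (by rw [map_sub, map_smul, hy, sub_self])
  have hht : h t = 0 := torsion_le_ker_of_isTorsionFree h ⟨r, hr⟩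
  have hgt : (r : R) • g t = 0 := by rw [← map_smul]; exact (congrArg g hr).trans (map_zero g)
  calc f t = S.g.hom (h t) + (r : R) • g t := by
        rw [← LinearMap.comp_apply, hh]; simp
    _ = 0 := by rw [hht, hgt, map_zero, add_zero]

variable (G) in
include hS in
lemma isDivisible_ulmSubmodule_ext_one_of_shortExact [IsDomain R] [IsPrincipalIdealRing R]
    [Injective S.X₂] [Module.IsTorsionFree R S.X₂] (hX₃ : IsDivisible R S.X₃) :
    IsDivisible R (ulmSubmodule R (Abelian.Ext G S.X₁ 1)) := by
  have hom_isDivisible : IsDivisible R ((G ⧸ Submodule.torsion R G) →ₗ[R] S.X₃) :=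
    isDivisible_linearMap hX₃.baer
  refine hom_isDivisible.ulmSubmodule_of_le_range
    (f := connectingHom hS G ∘ₗ LinearMap.lcomp R S.X₃ (Submodule.torsion R G).mkQ) ?_
  intro x hx
  obtain ⟨f, rfl⟩ := connectingHom_surjective hS G x
  have torsion_le_ker := torsion_le_ker_of_connectingHom_mem_ulmSubmodule hS hx
  refine ⟨(Submodule.torsion R G).liftQ f torsion_le_ker, ?_⟩
  rw [LinearMap.comp_apply, LinearMap.lcomp_apply', Submodule.liftQ_mkQ]

end ExtDivisible

section FractionSequence

variable (R : Type u) [CommRing R] [IsDomain R] [IsPrincipalIdealRing R]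
  (G H : ModuleCat.{max u v} R) [Module.IsTorsionFree R H]

theorem isDivisible_ulmSubmodule_ext_one :
    IsDivisible R (ulmSubmodule R (Abelian.Ext G H 1)) := by
  let ι := LocalizedModule.mkLinearMap R⁰ H
  let S : ShortComplex (ModuleCat.{max u v} R) :=
    ModuleCat.shortComplexOfCompEqZero ι (LinearMap.range ι).mkQ (LinearMap.range_mkQ_comp ι)
  have hS : S.ShortExact := ModuleCat.shortComplex_shortExact S
    (LinearMap.exact_map_mkQ_range ι) (mkLinearMap_injective_of_isTorsionFree R H)
    (Submodule.mkQ_surjective _)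
  have hD := isDivisible_localizedModule R H
  have : Module.IsTorsionFree R S.X₂ := isTorsionFree_localizedModule R H
  have : Injective S.X₂ := Module.injective_object_of_injective_module (inj := hD.baer.injective)
  exact isDivisible_ulmSubmodule_ext_one_of_shortExact hS G
    (hD.of_surjective (Submodule.mkQ_surjective (LinearMap.range ι)))

end FractionSequence

section Comparison

variable (R : Type u) [Ring R] {C : Type w} [Category.{v} C] [Abelian C] [Linear R C]
  [HasExt.{v} C] {X : C} (P : ProjectiveResolution X) (Y : C) (n : ℕ)

variable {R Y n} in
lemma smul_extMk (r : R) (f : P.complex.X n ⟶ Y) (m : ℕ) (hm : n + 1 = m)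
    (hf : P.complex.d m n ≫ f = 0) :
    r • P.extMk f m hm hf = P.extMk (r • f) m hm (by rw [Linear.comp_smul, hf, smul_zero]) := by
  simp only [Ext.smul_eq_comp_mk₀, P.extMk_comp_mk₀, Linear.comp_smul, Category.comp_id]

/-- The piece `Hom(Pₙ, Y) → Hom(Pₙ₊₁, Y) → Hom(Pₙ₊₂, Y)` of the cochain complex `Hom(P, Y)`. -/
noncomputable abbrev homShortComplex : ShortComplex (ModuleCat.{v} R) :=
  (P.complex.linearYonedaObj R Y).sc' n (n + 1) (n + 2)

/-- The class of a cocycle `Pₙ₊₁ ⟶ Y`, as a linear map. -/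
noncomputable def extMkLinearMap :
    LinearMap.ker (homShortComplex R P Y n).g.hom →ₗ[R] Abelian.Ext X Y (n + 1) where
  toFun f := P.extMk f.1 (n + 2) rfl f.2
  map_add' f g := (P.add_extMk f.1 g.1 (n + 2) rfl f.2 g.2).symm
  map_smul' r f := (smul_extMk P r f.1 (n + 2) rfl f.2).symm

lemma extMkLinearMap_surjective : Function.Surjective (extMkLinearMap R P Y n) := fun x ↦
  let ⟨f, hf, hx⟩ := P.extMk_surjective x (n + 2) rfl
  ⟨⟨f, hf⟩, hx⟩

lemma ker_extMkLinearMap :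
    LinearMap.ker (extMkLinearMap R P Y n) =
      LinearMap.range (homShortComplex R P Y n).moduleCatToCycles := by
  ext f
  refine (P.extMk_eq_zero_iff f.1 (n + 2) rfl f.2 n rfl).trans ?_
  exact exists_congr fun g ↦ ⟨fun h ↦ Subtype.ext h, congrArg Subtype.val⟩

variable [EnoughProjectives C] (X)

/-- The two models of Ext agree: `_root_.Ext`, which derives `Hom(-, Y)` through projective
resolutions, and `Abelian.Ext`, the morphisms `X ⟶ Y⟦n + 1⟧` in the derived category. -/
noncomputable def extLinearEquivAbelianExt :
    ((_root_.Ext R C (n + 1)).obj (op X)).obj Y ≃ₗ[R] Abelian.Ext X Y (n + 1) :=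
  let P := ProjectiveResolution.of X
  let K := P.complex.linearYonedaObj R Y
  let e := P.isoExt (n + 1) Y ≪≫
    ShortComplex.homologyMapIso (K.isoSc' n (n + 1) (n + 2) (by simp) (by simp)) ≪≫
      (homShortComplex R P Y n).moduleCatHomologyIso
  e.toLinearEquiv ≪≫ₗ Submodule.quotEquivOfEq _ _ (ker_extMkLinearMap R P Y n).symm ≪≫ₗ
    (extMkLinearMap R P Y n).quotKerEquivOfSurjective (extMkLinearMap_surjective R P Y n)

end Comparison

lemma linear_int_eq_preadditiveIntLinear {C : Type w} [Category.{v} C] [Preadditive C]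
    (L : Linear ℤ C) : L = Linear.preadditiveIntLinear := by
  obtain ⟨homModule, _, _⟩ := L
  obtain rfl : homModule = fun _ _ ↦ AddCommGroup.toIntModule _ := Subsingleton.elim _ _
  rfl

lemma mem_Pext1_iff {G H : Type} [AddCommGroup G] [AddCommGroup H] {x : Ext1 G H} :
    x ∈ Pext1 G H ↔ x ∈ ulmSubmodule ℤ (Ext1 G H) := by
  simp only [mem_ulmSubmodule_int_iff, Pext1, AddSubgroup.mem_iInf, AddMonoidHom.mem_range,
    AddMonoidHom.nsmul_apply, AddMonoidHom.id_apply]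

theorem pext_divisible_of_torsionFree_target_general (R : Type u) [CommRing R] [IsDomain R]
    [IsPrincipalIdealRing R] (G H : ModuleCat.{max u v} R) [Module.IsTorsionFree R H] :
    IsDivisible R (ulmSubmodule R
      (((_root_.Ext R (ModuleCat.{max u v} R) 1).obj (op G)).obj H)) :=
  (isDivisible_ulmSubmodule_ext_one.{v, u} R G H).ulmSubmodule_congr
    (extLinearEquivAbelianExt R G H 0).symm

/-- If the abelian group `H` is torsion-free, then for every abelian group `G`, the
subgroup `Pext¹(G,H) = ⋂_{n≥1} n·Ext¹(G,H)` is divisible: every `x ∈ Pext¹(G,H)` is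
`n·y` for some `y ∈ Pext¹(G,H)`, for every `n ≥ 1`. -/
theorem pext_divisible_of_torsionFree_target (G H : Type) [AddCommGroup G] [AddCommGroup H]
    (hH : ∀ (n : ℕ) (x : H), 1 ≤ n → n • x = 0 → x = 0) :
    ∀ x ∈ Pext1 G H, ∀ n : ℕ, 1 ≤ n → ∃ y ∈ Pext1 G H, n • y = x := by
  have := isTorsionFree_int_of_nsmul_eq_zero hH
  have hdiv := pext_divisible_of_torsionFree_target_general.{0, 0} ℤ (.of ℤ G) (.of ℤ H)
  -- `Ext1` uses the `ℤ`-linear structure of a preadditive category, not that of `ModuleCat ℤ`.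
  rw [linear_int_eq_preadditiveIntLinear ModuleCat.instLinear] at hdiv
  intro x hx n hn
  obtain ⟨y, hy, hyx⟩ := hdiv.exists_mem_smul_eq (r := n)
    (mem_nonZeroDivisors_of_ne_zero (by lia)) (mem_Pext1_iff.1 hx)
  exact ⟨y, mem_Pext1_iff.2 hy, (Nat.cast_smul_eq_nsmul ℤ n y).symm.trans hyx⟩
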